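/- Let Y ⊆ ℝ^k be a closed perfect set and let Z ⊆ ℝ∖{0} be σ-compact. Then the set Q of all y ∈ LP(ℤ,Y) such that the spectrum of H_{λy} has Hausdorff dimension zero for every λ ∈ Z is a Gδ subset of LP(ℤ,Y). -/

import Mathlib

/-!
For `d > 0`, the Hausdorff measure `H^d` and the Hausdorff content `H^d_∞` have the same null sets,
so `dimH s ≤ d` means that `H^u_∞(s) = 0` for a sequence of exponents `u` decreasing to `d`. Unlike
`H^d`, the content is outer regular with respect to open sets. Hence if a set-valued map `f` is
upper hemicontinuous, then `x ↦ H^u_∞(f x)` is upper semicontinuous, its zero set is a Gδ, and so is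
`{x | dimH (f x) ≤ d}`. The spectrum is upper hemicontinuous on a Banach algebra, and `H_W` depends
continuously on `W`, so this applies to `(y, λ) ↦ σ(H_{λy})`. Finally, the tube lemma shows that
quantifying a Gδ condition on `(y, λ)` over all `λ` in a σ-compact set leaves a Gδ condition on `y`.
-/

open Set MeasureTheory BoundedContinuousFunction

noncomputable section

/-- ℓ²(ℤ; ℝ). -/
abbrev Ell2 : Type := lp (fun _ : ℤ => ℝ) 2

/-- Spectrum of the discrete Schrödinger operator `H_W = Δ + W` on `ℓ²(ℤ)`:
`E` lies in the spectrum iff `H_W - E` is not a linear bijection of `ℓ²(ℤ)`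
(for bounded `W`, by the open mapping theorem this is equivalent to `H_W - E`
not being boundedly invertible). -/
def SchrodingerSpectrum (W : ℤ → ℝ) : Set ℝ :=
  {E : ℝ | ¬ ∃ T : Ell2 ≃ₗ[ℝ] Ell2,
      ∀ f : Ell2, ∀ n : ℤ,
        (T f) n = f (n - 1) + f (n + 1) + (W n - E) * f n}

/-- A Cantor set of zero Hausdorff dimension: nonempty, compact, without isolated
points, with empty interior, and of Hausdorff dimension zero. -/
def IsZeroDimCantor (s : Set ℝ) : Prop :=
  s.Nonempty ∧ IsCompact s ∧ Preperfect s ∧ interior s = ∅ ∧ dimH s = 0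

/-- Periodic bounded sequences. -/
def IsPeriodicSeq {α : Type*} [PseudoMetricSpace α] (W : ℤ →ᵇ α) : Prop :=
  ∃ q : ℕ, 0 < q ∧ ∀ n : ℤ, W (n + q) = W n

/-- The limit-periodic functions `ℤ → ℝ`: uniform limits of periodic functions. -/
def LPZ : Set (ℤ →ᵇ ℝ) := closure {W : ℤ →ᵇ ℝ | IsPeriodicSeq W}

/-- A subset of ℝ is discrete if it has no accumulation points. -/
def IsDiscreteSet (S : Set ℝ) : Prop := ∀ x : ℝ, ¬ AccPt x (Filter.principal S)

/-- Periodic extension `w^{♯ℤ}` of a finite word `w`. -/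
def perExt {α : Type*} [Zero α] {m : ℕ} (w : Fin m → α) : ℤ → α :=
  fun n =>
    if h : 0 < m then
      w ⟨(n % (m : ℤ)).toNat, by
        have h1 : 0 ≤ n % (m : ℤ) := Int.emod_nonneg n (by exact_mod_cast h.ne')
        have h2 : n % (m : ℤ) < (m : ℤ) := Int.emod_lt_of_pos n (by exact_mod_cast h)
        omega⟩
    else 0

/-- Aggregation `y^♮` of a sequence of blocks in `ℝ^k` into a potential `ℤ → ℝ`. -/
def agg (k : ℕ) (x : ℤ → (Fin k → ℝ)) : ℤ → ℝ :=
  fun n =>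
    if h : 0 < k then
      x (Int.fdiv n k) ⟨(n % (k : ℤ)).toNat, by
        have h1 : 0 ≤ n % (k : ℤ) := Int.emod_nonneg n (by exact_mod_cast h.ne')
        have h2 : n % (k : ℤ) < (k : ℤ) := Int.emod_lt_of_pos n (by exact_mod_cast h)
        omega⟩
    else 0

/-- `Y ⊆ ℝ^k` is gap-rich with exceptional set `S`: `S` is discrete and near any
word over `Y` there is a word over `Y` whose periodic Schrödinger operator has a
gap at any prescribed energy `E ∉ S`. -/
def GapRich (k : ℕ) (Y : Set (Fin k → ℝ)) (S : Set ℝ) : Prop :=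
  IsDiscreteSet S ∧
  ∀ E : ℝ, E ∉ S → ∀ m : ℕ, 0 < m → ∀ x : Fin m → (Fin k → ℝ), (∀ i, x i ∈ Y) →
    ∀ ε : ℝ, 0 < ε →
      ∃ l : ℕ, 0 < l ∧ ∃ y : Fin l → (Fin k → ℝ),
        (∀ i, y i ∈ Y) ∧
        (∀ j : ℤ, dist (perExt x j) (perExt y j) < ε) ∧
        E ∉ SchrodingerSpectrum (agg k (perExt y))

/-- The periodic elements of `Y^ℤ`. -/
def PerY (k : ℕ) (Y : Set (Fin k → ℝ)) : Set (ℤ →ᵇ (Fin k → ℝ)) :=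
  {x | IsPeriodicSeq x ∧ ∀ n : ℤ, x n ∈ Y}

/-- The limit-periodic elements of `Y^ℤ`: uniform limits of periodic elements. -/
def LPY (k : ℕ) (Y : Set (Fin k → ℝ)) : Set (ℤ →ᵇ (Fin k → ℝ)) := closure (PerY k Y)

open scoped ENNReal NNReal Topology lp
open Filter Metric

section SigmaCompact

variable {X Y : Type*} [TopologicalSpace X] [TopologicalSpace Y]

lemma isOpen_setOfPred_forall_mem_of_isCompact {K : Set Y} (hK : IsCompact K) {O : Set (X × Y)}
    (hO : IsOpen O) : IsOpen {x | ∀ y ∈ K, (x, y) ∈ O} :=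
  isOpen_iff_mem_nhds.2 fun _ hx =>
    hK.eventually_forall_of_forall_eventually fun y hy => hO.mem_nhds (hx y hy)

lemma isGδ_setOfPred_forall_mem_of_isSigmaCompact {Z : Set Y} (hZ : IsSigmaCompact Z)
    {S : Set (X × Y)} (hS : IsGδ S) : IsGδ {x | ∀ y ∈ Z, (x, y) ∈ S} := by
  obtain ⟨K, hK, rfl⟩ := hZ
  obtain ⟨O, hO, rfl⟩ := isGδ_iff_eq_iInter_nat.1 hS
  have h_eq : {x | ∀ y ∈ ⋃ j, K j, (x, y) ∈ ⋂ n, O n} =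
      ⋂ (j) (n), {x | ∀ y ∈ K j, (x, y) ∈ O n} := by
    ext x
    simp only [mem_iUnion, mem_iInter, mem_ofPred_eq]
    grind
  rw [h_eq]
  exact .iInter fun j => .iInter_of_isOpen fun n =>
    isOpen_setOfPred_forall_mem_of_isCompact (hK j) (hO n)

end SigmaCompact

section HausdorffContent

variable {E : Type*} [EMetricSpace E] {d : ℝ} {s : Set E}

/-- The `d`-dimensional Hausdorff content `H^d_∞`: the Hausdorff outer measure without the
restriction to covers by sets of small diameter. Using `boundedBy` gives the empty set content `0`
also for `d ≤ 0`, where `0 ^ d ≠ 0`. -/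
def hausdorffContent (d : ℝ) : OuterMeasure E :=
  OuterMeasure.boundedBy fun s => ediam s ^ d

lemma hausdorffContent_le_ediam_rpow (d : ℝ) (s : Set E) : hausdorffContent d s ≤ ediam s ^ d :=
  OuterMeasure.boundedBy_le s

lemma hausdorffContent_le_hausdorffMeasure [MeasurableSpace E] [BorelSpace E] (d : ℝ)
    (s : Set E) : hausdorffContent d s ≤ μH[d] s := by
  rw [Measure.hausdorffMeasure_apply, hausdorffContent, OuterMeasure.boundedBy_apply]
  exact le_iSup₂_of_le ∞ ENNReal.coe_lt_top (by simp)

lemma exists_cover_tsum_lt_of_hausdorffContent_lt (hd : 0 < d) {a : ℝ≥0∞}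
    (ha : hausdorffContent d s < a) :
    ∃ t : ℕ → Set E, s ⊆ ⋃ i, t i ∧ ∑' i, ediam (t i) ^ d < a := by
  rw [hausdorffContent, OuterMeasure.boundedBy_eq_ofFunction (by simp [hd]),
    OuterMeasure.ofFunction_apply] at ha
  simpa only [iInf_lt_iff, exists_prop] using ha

lemma hausdorffMeasure_eq_zero_iff_hausdorffContent_eq_zero [MeasurableSpace E] [BorelSpace E]
    (hd : 0 < d) : μH[d] s = 0 ↔ hausdorffContent d s = 0 := by
  refine ⟨fun h => nonpos_iff_eq_zero.1 (h ▸ hausdorffContent_le_hausdorffMeasure d s),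
    fun h => ?_⟩
  simp only [Measure.hausdorffMeasure_apply, ENNReal.iSup_eq_zero]
  intro r hr
  refine nonpos_iff_eq_zero.1 (le_of_forall_gt fun ε hε => ?_)
  -- A sum of `d`-th powers below `r ^ d` forces every covering set to have diameter at most `r`.
  obtain ⟨t, hst, ht⟩ : ∃ t : ℕ → Set E, s ⊆ ⋃ i, t i ∧ ∑' i, ediam (t i) ^ d < min ε (r ^ d) :=
    exists_cover_tsum_lt_of_hausdorffContent_lt hd
      (h ▸ lt_min hε (ENNReal.rpow_pos_of_nonneg hr hd.le))
  have h_ediam (i) : ediam (t i) ≤ r :=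
    (ENNReal.rpow_le_rpow_iff hd).1
      ((ENNReal.le_tsum i).trans (ht.le.trans (min_le_right _ _)))
  refine lt_of_le_of_lt (iInf₂_le_of_le t hst (iInf_le_of_le h_ediam ?_))
    (ht.trans_le (min_le_left _ _))
  exact ENNReal.tsum_le_tsum fun i => iSup_const_le

lemma exists_isOpen_ediam_rpow_lt (hd : 0 < d) {a : ℝ≥0∞} (ha : ediam s ^ d < a) :
    ∃ U, IsOpen U ∧ s ⊆ U ∧ ediam U ^ d < a := by
  have h_cont : Continuous fun δ : ℝ≥0 => (ediam s + 2 * δ) ^ d := by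
    fun_prop (disch := simp)
  have h_lt : ∀ᶠ δ : ℝ≥0 in 𝓝[>] 0, (ediam s + 2 * δ) ^ d < a :=
    nhdsWithin_le_nhds (h_cont.tendsto 0 |>.eventually_lt_const (by simpa using ha))
  obtain ⟨δ, hδ, hδ_pos⟩ := (h_lt.and self_mem_nhdsWithin).exists
  exact ⟨thickening δ s, isOpen_thickening, self_subset_thickening (NNReal.coe_pos.2 hδ_pos) s,
    (ENNReal.rpow_le_rpow (ediam_thickening_le δ) hd.le).trans_lt hδ⟩

lemma exists_isOpen_hausdorffContent_lt (hd : 0 < d) {a : ℝ≥0∞}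
    (ha : hausdorffContent d s < a) : ∃ U, IsOpen U ∧ s ⊆ U ∧ hausdorffContent d U < a := by
  obtain ⟨t, hst, ht⟩ := exists_cover_tsum_lt_of_hausdorffContent_lt hd ha
  obtain ⟨ε, hε, hε_sum⟩ := ENNReal.exists_pos_sum_of_countable' (tsub_pos_of_lt ht).ne' ℕ
  have ht_ne_top (i) : ediam (t i) ^ d ≠ ∞ := ((ENNReal.le_tsum i).trans_lt ht).ne_top
  choose U hU htU hU_lt using fun i =>
    exists_isOpen_ediam_rpow_lt hd (ENNReal.lt_add_right (ht_ne_top i) (hε i).ne')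
  refine ⟨⋃ i, U i, isOpen_iUnion hU, hst.trans (iUnion_mono htU), ?_⟩
  calc hausdorffContent d (⋃ i, U i)
      ≤ ∑' i, hausdorffContent d (U i) := measure_iUnion_le U
    _ ≤ ∑' i, (ediam (t i) ^ d + ε i) :=
        ENNReal.tsum_le_tsum fun i => (hausdorffContent_le_ediam_rpow d _).trans (hU_lt i).le
    _ = ∑' i, ediam (t i) ^ d + ∑' i, ε i := ENNReal.tsum_add
    _ < a := lt_tsub_iff_left.1 hε_sum

lemma dimH_le_iff_forall_hausdorffContent_eq_zero {d : ℝ≥0} {u : ℕ → ℝ≥0}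
    (hdu : ∀ n, d < u n) (hu : Tendsto u atTop (𝓝 d)) :
    dimH s ≤ d ↔ ∀ n, hausdorffContent (u n) s = 0 := by
  borelize E
  simp only [← hausdorffMeasure_eq_zero_iff_hausdorffContent_eq_zero
    (NNReal.coe_pos.2 (pos_of_gt (hdu _)))]
  refine ⟨fun h n => hausdorffMeasure_of_dimH_lt (h.trans_lt (ENNReal.coe_lt_coe.2 (hdu n))),
    fun h => ge_of_tendsto' (ENNReal.tendsto_coe.2 hu) fun n => ?_⟩
  exact dimH_le_of_hausdorffMeasure_ne_top (by simp [h n])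

end HausdorffContent

section UpperHemicontinuous

variable {X E : Type*} [TopologicalSpace X] [EMetricSpace E] {f : X → Set E}

lemma upperSemicontinuous_hausdorffContent (hf : UpperHemicontinuous f) {d : ℝ} (hd : 0 < d) :
    UpperSemicontinuous fun x => hausdorffContent d (f x) := by
  intro x a ha
  obtain ⟨U, hU, hxU, hUa⟩ := exists_isOpen_hausdorffContent_lt hd ha
  filter_upwards [(upperHemicontinuous_iff_isOpen_preimage_Iic.1 hf U hU).mem_nhds hxU] with y hyU
  exact (measure_mono hyU).trans_lt hUa

lemma isGδ_setOfPred_eq_zero_of_upperSemicontinuous {g : X → ℝ≥0∞} (hg : UpperSemicontinuous g) :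
    IsGδ {x | g x = 0} := by
  have h_eq : {x | g x = 0} = ⋂ n : ℕ, g ⁻¹' Iio (n : ℝ≥0∞)⁻¹ := by
    ext x
    simp only [mem_ofPred_eq, mem_iInter, mem_preimage, mem_Iio]
    refine ⟨fun hx n => by simp [hx], fun hx => of_not_not fun hne => ?_⟩
    obtain ⟨n, hn⟩ := ENNReal.exists_inv_nat_lt hne
    exact lt_asymm hn (hx n)
  rw [h_eq]
  exact .iInter_of_isOpen fun n => hg.isOpen_preimage _

theorem isGδ_setOfPred_dimH_le (hf : UpperHemicontinuous f) (d : ℝ≥0) :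
    IsGδ {x | dimH (f x) ≤ d} := by
  obtain ⟨u, -, hdu, hu⟩ := exists_seq_strictAnti_tendsto d
  simp only [dimH_le_iff_forall_hausdorffContent_eq_zero hdu hu, ofPred_forall]
  exact .iInter fun n => isGδ_setOfPred_eq_zero_of_upperSemicontinuous
    (upperSemicontinuous_hausdorffContent hf (NNReal.coe_pos.2 (pos_of_gt (hdu n))))

end UpperHemicontinuous

lemma mem_spectrum_iff_not_exists_linearEquiv {𝕜 V : Type*} [NontriviallyNormedField 𝕜]
    [NormedAddCommGroup V] [NormedSpace 𝕜 V] [CompleteSpace V] {A : V →L[𝕜] V} {c : 𝕜} :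
    c ∈ spectrum 𝕜 A ↔ ¬ ∃ T : V ≃ₗ[𝕜] V, ∀ v, T v = A v - c • v := by
  -- `isUnit_iff_bijective` is the open mapping theorem.
  rw [spectrum.mem_iff, ← IsUnit.neg_iff, neg_sub, ContinuousLinearMap.isUnit_iff_bijective]
  set B : V →L[𝕜] V := A - algebraMap 𝕜 (V →L[𝕜] V) c
  have hB (v : V) : B v = A v - c • v := by simp [B, Algebra.algebraMap_eq_smul_one]
  refine not_congr ⟨fun h => ⟨.ofBijective (B : V →ₗ[𝕜] V) h, hB⟩, fun ⟨T, hT⟩ => ?_⟩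
  have hBT : ⇑B = T := funext fun v => (hB v).trans (hT v).symm
  exact hBT ▸ T.bijective

section LpOperators

variable {ι κ 𝕜 E : Type*} {p : ℝ≥0∞} [RCLike 𝕜] [NormedAddCommGroup E] [NormedSpace 𝕜 E]

lemma memℓp_comp_of_injective {f : κ → E} (hf : Memℓp f p) {σ : ι → κ}
    (hσ : Function.Injective σ) : Memℓp (f ∘ σ) p := by
  obtain rfl | rfl | hp := p.trichotomy
  · exact memℓp_zero (hf.finite_dsupport.preimage hσ.injOn)
  · exact memℓp_infty (hf.bddAbove.mono (range_comp_subset_range σ fun k => ‖f k‖))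
  · exact memℓp_gen ((hf.summable hp).comp_injective hσ)

lemma norm_lp_comp_le_of_injective (hp : p ≠ 0) (f : ℓ^p(κ, E)) {σ : ι → κ}
    (hσ : Function.Injective σ) :
    ‖(⟨f ∘ σ, memℓp_comp_of_injective (lp.memℓp f) hσ⟩ : ℓ^p(ι, E))‖ ≤ ‖f‖ := by
  obtain rfl | rfl | hp' := p.trichotomy
  · exact (hp rfl).elim
  · exact lp.norm_le_of_forall_le (norm_nonneg f) fun i => lp.norm_apply_le_norm hp f (σ i)
  · refine lp.norm_le_of_forall_sum_le hp' (lp.norm_nonneg' f) fun s => ?_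
    simpa using lp.sum_rpow_le_norm_rpow hp' f (s.map ⟨σ, hσ⟩)

variable [Fact (1 ≤ p)]

variable (𝕜 p E) in
/-- Composition with an injective map `σ` of index sets, as a bounded operator between `ℓ^p`
spaces. The shifts of `ℤ` are of this form. -/
def lpCompRight (σ : ι ↪ κ) : ℓ^p(κ, E) →L[𝕜] ℓ^p(ι, E) :=
  LinearMap.mkContinuous
    { toFun f := ⟨f ∘ σ, memℓp_comp_of_injective (lp.memℓp f) σ.injective⟩
      map_add' _ _ := rfl
      map_smul' _ _ := rfl }
    1 fun f => by
      rw [one_mul]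
      exact norm_lp_comp_le_of_injective (zero_lt_one.trans_le Fact.out).ne' f σ.injective

lemma lpCompRight_apply (σ : ι ↪ κ) (f : ℓ^p(κ, E)) (i : ι) :
    lpCompRight 𝕜 E p σ f i = f (σ i) := rfl

variable [TopologicalSpace ι] [DiscreteTopology ι]

variable (𝕜 p E) in
/-- Pointwise multiplication of `ℓ^p` sequences by bounded scalar sequences, as a continuous
bilinear map. -/
def lpMul : (ι →ᵇ 𝕜) →L[𝕜] ℓ^p(ι, E) →L[𝕜] ℓ^p(ι, E) :=
  lp.holderL (p := ∞) p (fun _ => ContinuousLinearMap.lsmul 𝕜 𝕜) (K := 1)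
    (fun _ => ContinuousLinearMap.opNorm_lsmul_le) ∘L
      (lpBCFₗᵢ 𝕜 𝕜).symm.toContinuousLinearEquiv.toContinuousLinearMap

lemma lpMul_apply (a : ι →ᵇ 𝕜) (f : ℓ^p(ι, E)) (i : ι) : lpMul 𝕜 E p a f i = a i • f i := rfl

end LpOperators

section SchrodingerOperator

/-- The discrete Schrödinger operator `Δ + W` with bounded potential `W`, as a bounded operator on
`ℓ²(ℤ)`. -/
def schrodingerOp (W : ℤ →ᵇ ℝ) : Ell2 →L[ℝ] Ell2 :=
  lpCompRight ℝ ℝ 2 (Equiv.subRight (1 : ℤ)).toEmbedding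
    + lpCompRight ℝ ℝ 2 (Equiv.addRight (1 : ℤ)).toEmbedding + lpMul ℝ ℝ 2 W

lemma schrodingerOp_apply (W : ℤ →ᵇ ℝ) (f : Ell2) (n : ℤ) :
    schrodingerOp W f n = f (n - 1) + f (n + 1) + W n * f n := rfl

lemma continuous_schrodingerOp : Continuous schrodingerOp := by
  unfold schrodingerOp
  fun_prop

lemma schrodingerSpectrum_eq_spectrum (W : ℤ →ᵇ ℝ) :
    SchrodingerSpectrum W = spectrum ℝ (schrodingerOp W) := by
  ext E
  rw [mem_spectrum_iff_not_exists_linearEquiv]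
  have h_apply (f : Ell2) (n : ℤ) : (schrodingerOp W f - E • f) n =
      f (n - 1) + f (n + 1) + (W n - E) * f n := by
    rw [lp.coeFn_sub, lp.coeFn_smul, Pi.sub_apply, Pi.smul_apply, smul_eq_mul, schrodingerOp_apply]
    ring
  simp only [SchrodingerSpectrum, mem_ofPred_eq, lp.ext_iff, funext_iff, h_apply]

lemma upperHemicontinuous_schrodingerSpectrum :
    UpperHemicontinuous fun W : ℤ →ᵇ ℝ => SchrodingerSpectrum W := by
  simp only [schrodingerSpectrum_eq_spectrum]
  exact (upperHemicontinuous_spectrum ℝ _).comp continuous_schrodingerOp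

end SchrodingerOperator

section Aggregation

variable (k : ℕ)

lemma norm_agg_le (x : ℤ →ᵇ (Fin k → ℝ)) (n : ℤ) : ‖agg k x n‖ ≤ ‖x‖ := by
  unfold agg
  split_ifs
  · exact (norm_le_pi_norm _ _).trans (x.norm_coe_le_norm _)
  · simp

/-- Aggregation `x ↦ x^♮` as a continuous linear map between spaces of bounded sequences. -/
def aggCLM : (ℤ →ᵇ (Fin k → ℝ)) →L[ℝ] (ℤ →ᵇ ℝ) :=
  LinearMap.mkContinuous
    { toFun x := ofNormedAddCommGroupDiscrete (agg k x) ‖x‖ (norm_agg_le k x)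
      map_add' x y := by
        ext n
        change agg k (x + y) n = agg k x n + agg k y n
        unfold agg
        split_ifs <;> simp
      map_smul' c x := by
        ext n
        change agg k (c • x) n = c • agg k x n
        unfold agg
        split_ifs <;> simp }
    1 fun x => by
      rw [one_mul]
      exact norm_ofNormedAddCommGroup_le _ (norm_nonneg x) (norm_agg_le k x)

lemma aggCLM_apply (x : ℤ →ᵇ (Fin k → ℝ)) (n : ℤ) : aggCLM k x n = agg k x n := rfl

end Aggregation

theorem zero_dimH_set_isGδ_general {X : Type*} [TopologicalSpace X] {V : X → (ℤ →ᵇ ℝ)}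
    (hV : Continuous V) {Z : Set ℝ} (hZ : IsSigmaCompact Z) (d : ℝ≥0) :
    IsGδ {x | ∀ lam ∈ Z, dimH (SchrodingerSpectrum fun n => lam * V x n) ≤ d} := by
  have h_cont : Continuous fun q : X × ℝ => q.2 • V q.1 := by fun_prop
  exact isGδ_setOfPred_forall_mem_of_isSigmaCompact hZ
    (isGδ_setOfPred_dimH_le (upperHemicontinuous_schrodingerSpectrum.comp h_cont) d)

/-- For a closed perfect `Y ⊆ ℝ^k` and σ-compact `Z ⊆ ℝ∖{0}`, the set of
`y ∈ LP(ℤ,Y)` such that `σ(H_{λy})` has Hausdorff dimension zero for every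
`λ ∈ Z` is a Gδ subset of `LP(ℤ,Y)`. -/
theorem zero_dimH_set_isGδ (k : ℕ) (hk : 0 < k)
    (Y : Set (Fin k → ℝ)) (hY : Perfect Y)
    (Z : Set ℝ) (hZ0 : ∀ lam ∈ Z, lam ≠ 0) (hZσ : IsSigmaCompact Z) :
    IsGδ {y : LPY k Y |
      ∀ lam ∈ Z,
        dimH (SchrodingerSpectrum
          (fun n => lam * agg k (⇑(y : ℤ →ᵇ (Fin k → ℝ))) n)) = 0} := by
  simpa [aggCLM_apply] using
    zero_dimH_set_isGδ_general ((aggCLM k).continuous.comp continuous_subtype_val) hZσ 0
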